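/- Let k have prime characteristic p > 2, let V = kv ⊕ kw, and let G = ⟨g⟩ ≤ GL_2(k) be the cyclic group of order p generated by g with ᵍv = v and ᵍw = v + w. Define λ(g^i, v) = i g^i for all i, λ(1, w) = λ(g, w) = 0, λ(g^i, w) = binom(i,2) g^i for i ≥ 2, and κ = 0. Then H_{λ,0} = T_{kG}(kG⊗V⊗kG)/( gv − vg − g, gw − vg − wg, vw − wv ) is a PBW deformation of S(V)⋊G. -/

import Mathlib

open TensorProduct

noncomputable section

namespace DeformKoszul

variable (k G V : Type) [Field k] [Group G] [AddCommGroup V] [Module k V]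

/-- The free `k`-algebra on the vector space `kG ⊕ V`. -/
abbrev FreeAlg := TensorAlgebra k (MonoidAlgebra k G × V)

/-- The canonical embedding of the group algebra `kG` into the free algebra. -/
def gIn : MonoidAlgebra k G →ₗ[k] FreeAlg k G V :=
  (TensorAlgebra.ι k).comp (LinearMap.inl k (MonoidAlgebra k G) V)

/-- The canonical embedding of `V` into the free algebra. -/
def vIn : V →ₗ[k] FreeAlg k G V :=
  (TensorAlgebra.ι k).comp (LinearMap.inr k (MonoidAlgebra k G) V)

/-- `V ⊗ kG → FreeAlg`, `v ⊗ x ↦ v·x`. -/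
def embVG : V ⊗[k] MonoidAlgebra k G →ₗ[k] FreeAlg k G V :=
  (LinearMap.mul' k _).comp (TensorProduct.map (vIn k G V) (gIn k G V))

variable (ρ : Representation k G V)

/-- The defining relations of `H_{λ,κ}`: `kG` is a subalgebra (with the same unit),
`g·v = (ᵍv)·g + λ(g,v)`, and `v·w = w·v + κ^L(v,w) + κ^C(v,w)`. -/
inductive PRel (lam : G → V →ₗ[k] MonoidAlgebra k G)
    (κC : V →ₗ[k] V →ₗ[k] MonoidAlgebra k G)
    (κL : V →ₗ[k] V →ₗ[k] (V ⊗[k] MonoidAlgebra k G)) :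
    FreeAlg k G V → FreeAlg k G V → Prop
  | unit : PRel lam κC κL (gIn k G V 1) 1
  | gmul (x y : MonoidAlgebra k G) :
      PRel lam κC κL (gIn k G V x * gIn k G V y) (gIn k G V (x * y))
  | act (g : G) (v : V) :
      PRel lam κC κL (gIn k G V (MonoidAlgebra.of k G g) * vIn k G V v)
        (vIn k G V (ρ g v) * gIn k G V (MonoidAlgebra.of k G g) + gIn k G V (lam g v))
  | comm (v w : V) :
      PRel lam κC κL (vIn k G V v * vIn k G V w)
        (vIn k G V w * vIn k G V v + embVG k G V (κL v w) + gIn k G V (κC v w))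

variable (lam : G → V →ₗ[k] MonoidAlgebra k G)
    (κC : V →ₗ[k] V →ₗ[k] MonoidAlgebra k G)
    (κL : V →ₗ[k] V →ₗ[k] (V ⊗[k] MonoidAlgebra k G))

/-- The algebra `H_{λ,κ}`.  For `lam = 0`, `κC = 0`, `κL = 0` this is (the presentation
of) the skew group algebra `S(V) ⋊ G`. -/
abbrev HP := RingQuot (PRel k G V ρ lam κC κL)

/-- The quotient map onto `H_{λ,κ}`. -/
def toHP : FreeAlg k G V →ₐ[k] HP k G V ρ lam κC κL :=
  RingQuot.mkAlgHom k (PRel k G V ρ lam κC κL)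

/-- Degree-`n` part of the free algebra: `kG` has degree 0 and `V` degree 1. -/
def grT : ℕ → Submodule k (FreeAlg k G V)
  | 0 => Subalgebra.toSubmodule (Algebra.adjoin k (Set.range (gIn k G V)))
  | n+1 => grT n * (LinearMap.range (vIn k G V) * grT 0)

/-- Filtration of the free algebra, `kG` in degree 0 and `V` in degree 1. -/
def filtT : ℕ → Submodule k (FreeAlg k G V)
  | 0 => grT k G V 0
  | n+1 => filtT n ⊔ grT k G V (n+1)

/-- The induced filtration on `H_{λ,κ}`. -/
def filtP (d : ℕ) : Submodule k (HP k G V ρ lam κC κL) :=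
  (filtT k G V d).map (toHP k G V ρ lam κC κL).toLinearMap

/-- `H_{λ,κ}` is a PBW deformation of `S(V) ⋊ G`:  the associated graded algebra is
`S(V) ⋊ G`, equivalently (all filtered pieces being finite dimensional) each filtered
piece has the same dimension as the corresponding one of `S(V) ⋊ G = H_{0,0}`. -/
def IsPBWP : Prop :=
  ∀ d, Module.finrank k (filtP k G V ρ lam κC κL d) = Module.finrank k (filtP k G V ρ 0 0 0 d)

section Example8


variable (k : Type) [Field k] (p : ℕ) [Fact p.Prime] [CharP k p]

/-- scalar of `x = gⁱ`, namely `i` viewed in `k` (well defined since `char k = p`). -/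
def cf (x : Multiplicative (ZMod p)) : k := ZMod.castHom (dvd_refl p) k x.toAdd

lemma cf_mul (x y : Multiplicative (ZMod p)) : cf k p (x * y) = cf k p x + cf k p y := by
  simp [cf, toAdd_mul, map_add]

lemma cf_one : cf k p 1 = 0 := by simp [cf]

/-- the distinguished generator `g` of the cyclic group of order `p`. -/
def gg : Multiplicative (ZMod p) := Multiplicative.ofAdd 1


/-- the nilpotent part on `k²`: `f ↦ f(1)·e₀`. -/
def E2 : (Fin 2 → k) →ₗ[k] (Fin 2 → k) :=
  (LinearMap.single k (fun _ => k) 0).comp (LinearMap.proj 1)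

lemma E2sq : (E2 k) * (E2 k) = 0 := by
  ext f i
  simp [E2, Module.End.mul_apply, Pi.single_apply]

/-- the representation of `G = ⟨g⟩ ≅ ℤ/p` on `V = kv ⊕ kw` with `ᵍv = v`,
`ᵍw = v + w` (so `v = e₀`, `w = e₁`). -/
def ρ2 : Representation k (Multiplicative (ZMod p)) (Fin 2 → k) where
  toFun x := 1 + cf k p x • E2 k
  map_one' := by simp [cf_one]
  map_mul' x y := by
    show 1 + cf k p (x * y) • E2 k = (1 + cf k p x • E2 k) * (1 + cf k p y • E2 k)
    rw [cf_mul, add_smul, mul_add, add_mul, add_mul, mul_one, one_mul, smul_mul_smul_comm,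
      E2sq, smul_zero]
    simp only [mul_one]
    abel

/-- `λ(gⁱ, v) = i·gⁱ`, `λ(1,w) = λ(g,w) = 0`, `λ(gⁱ, w) = (i choose 2)·gⁱ = (i(i−1)/2)·gⁱ`. -/
def lam8 : Multiplicative (ZMod p) → (Fin 2 → k) →ₗ[k] MonoidAlgebra k (Multiplicative (ZMod p)) :=
  fun x =>
    (LinearMap.proj 0 : ((Fin 2 → k)) →ₗ[k] k).smulRight
      (cf k p x • MonoidAlgebra.single x (1 : k))
    + (LinearMap.proj 1 : ((Fin 2 → k)) →ₗ[k] k).smulRight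
      ((cf k p x * (cf k p x - 1) / 2) • MonoidAlgebra.single x (1 : k))

end Example8

end DeformKoszul

open DeformKoszul

/-!
If `λ(g,v) = ℓ(g,v) g` for a function `ℓ : G × V → k` linear in `v`, the relation
`gv = (ᵍv)g + λ(g,v)` reads `gv = (ᵍv + ℓ(g,v))g`. When moreover `ℓ` satisfies the cocycle identity
`ℓ(gh,v) = ℓ(g,ʰv) + ℓ(h,v)`, the affine maps `v ↦ ᵍv + ℓ(g,v)` extend to an action of `G` on `S(V)`
by algebra automorphisms, and `H_{λ,0}` is the skew group algebra of this action. Its filtration is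
the one by degree in `S(V)`, which as a filtration of the vector space `S(V) ⊗ kG` does not depend
on `ℓ`; for `ℓ = 0` it is that of `S(V) ⋊ G`. In the Jordan block example the cocycle identity is
`binom(a + b, 2) = binom(a, 2) + binom(b, 2) + ab`.
-/

namespace DeformKoszul

section General

variable {k G V : Type} [Field k] [AddCommGroup V] [Module k V]

lemma grT_zero :
    grT k G V 0 = Subalgebra.toSubmodule (Algebra.adjoin k (Set.range (gIn k G V))) := by
  rw [grT]

lemma grT_succ (n : ℕ) :
    grT k G V (n + 1) = grT k G V n * (LinearMap.range (vIn k G V) * grT k G V 0) := by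
  conv_lhs => rw [grT]

lemma filtT_succ (n : ℕ) : filtT k G V (n + 1) = filtT k G V n ⊔ grT k G V (n + 1) :=
  rfl

lemma grT_zero_mul_grT_zero : grT k G V 0 * grT k G V 0 = grT k G V 0 := by
  rw [grT_zero, (Subalgebra.isIdempotentElem_toSubmodule _).eq]

lemma grT_mul_grT_zero (n : ℕ) : grT k G V n * grT k G V 0 = grT k G V n := by
  cases n with
  | zero => exact grT_zero_mul_grT_zero
  | succ n => rw [grT_succ, mul_assoc, mul_assoc, grT_zero_mul_grT_zero]

lemma filtT_mul_grT_zero (n : ℕ) : filtT k G V n * grT k G V 0 = filtT k G V n := by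
  induction n with
  | zero => exact grT_zero_mul_grT_zero
  | succ n ih => rw [filtT_succ, Submodule.sup_mul, ih, grT_mul_grT_zero]

lemma filtT_succ_eq_sup_mul (n : ℕ) :
    filtT k G V (n + 1) =
      filtT k G V n ⊔ filtT k G V n * (LinearMap.range (vIn k G V) * grT k G V 0) := by
  induction n with
  | zero => rw [filtT_succ, grT_succ, filtT]
  | succ n ih =>
    have hle : filtT k G V n * (LinearMap.range (vIn k G V) * grT k G V 0) ≤
        filtT k G V (n + 1) := ih ▸ le_sup_right
    rw [filtT_succ (n + 1), grT_succ (n + 1)]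
    nth_rw 3 [filtT_succ n]
    rw [Submodule.sup_mul, ← sup_assoc, sup_eq_left.mpr hle]

lemma filtT_succ_eq_mul (n : ℕ) :
    filtT k G V (n + 1) =
      filtT k G V n * ((1 ⊔ LinearMap.range (vIn k G V)) * grT k G V 0) := by
  rw [filtT_succ_eq_sup_mul, Submodule.sup_mul, one_mul, Submodule.mul_sup, filtT_mul_grT_zero]

variable [Group G] (ρ : Representation k G V) (lam : G → V →ₗ[k] MonoidAlgebra k G)
    (κC : V →ₗ[k] V →ₗ[k] MonoidAlgebra k G)
    (κL : V →ₗ[k] V →ₗ[k] (V ⊗[k] MonoidAlgebra k G))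

/-- The structure map `kG → H_{λ,κ}`. -/
def ofGroupAlg : MonoidAlgebra k G →ₐ[k] HP k G V ρ lam κC κL :=
  AlgHom.ofLinearMap ((toHP k G V ρ lam κC κL).toLinearMap ∘ₗ gIn k G V)
    ((RingQuot.mkAlgHom_rel k PRel.unit).trans (map_one _))
    fun x y => (RingQuot.mkAlgHom_rel k (PRel.gmul x y)).symm.trans (map_mul _ _ _)

/-- The structure map `V → H_{λ,κ}`. -/
def ofVec : V →ₗ[k] HP k G V ρ lam κC κL :=
  (toHP k G V ρ lam κC κL).toLinearMap ∘ₗ vIn k G V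

lemma toHP_gIn (a : MonoidAlgebra k G) :
    toHP k G V ρ lam κC κL (gIn k G V a) = ofGroupAlg ρ lam κC κL a :=
  rfl

lemma toHP_vIn (v : V) : toHP k G V ρ lam κC κL (vIn k G V v) = ofVec ρ lam κC κL v :=
  rfl

lemma ofGroupAlg_of_mul_ofVec (g : G) (v : V) :
    ofGroupAlg ρ lam κC κL (MonoidAlgebra.of k G g) * ofVec ρ lam κC κL v =
      ofVec ρ lam κC κL (ρ g v) * ofGroupAlg ρ lam κC κL (MonoidAlgebra.of k G g) +
        ofGroupAlg ρ lam κC κL (lam g v) := by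
  simp only [← toHP_gIn, ← toHP_vIn, ← map_mul, ← map_add]
  exact RingQuot.mkAlgHom_rel k (PRel.act g v)

/-- The image of `kG` in `H_{λ,κ}`. -/
def groupPart : Submodule k (HP k G V ρ lam κC κL) :=
  Subalgebra.toSubmodule (ofGroupAlg ρ lam κC κL).range

/-- The subspace `k + V` of `H_{λ,κ}`. -/
def affinePart : Submodule k (HP k G V ρ lam κC κL) :=
  1 ⊔ LinearMap.range (ofVec ρ lam κC κL)

lemma groupPart_mul_groupPart :
    groupPart ρ lam κC κL * groupPart ρ lam κC κL = groupPart ρ lam κC κL :=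
  (Subalgebra.isIdempotentElem_toSubmodule _).eq

lemma one_le_groupPart : 1 ≤ groupPart ρ lam κC κL :=
  Submodule.one_le.2 (one_mem (ofGroupAlg ρ lam κC κL).range)

lemma groupPart_eq_iSup_span :
    groupPart ρ lam κC κL =
      ⨆ g : G, k ∙ ofGroupAlg ρ lam κC κL (MonoidAlgebra.of k G g) := by
  rw [← Submodule.span_range_eq_iSup]
  refine le_antisymm ?_ (Submodule.span_le.2 (Set.range_subset_iff.2 fun g => ⟨_, rfl⟩))
  rintro _ ⟨a, rfl⟩
  induction a using MonoidAlgebra.induction_on with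
  | of g => exact Submodule.subset_span ⟨g, rfl⟩
  | add a b ha hb => exact map_add (ofGroupAlg ρ lam κC κL) a b ▸ add_mem ha hb
  | smul c a ha => exact map_smul (ofGroupAlg ρ lam κC κL) c a ▸ Submodule.smul_mem _ c ha

lemma groupPart_mul_affinePart_le :
    groupPart ρ lam κC κL * affinePart ρ lam κC κL ≤
      affinePart ρ lam κC κL * groupPart ρ lam κC κL := by
  rw [affinePart, Submodule.mul_sup, mul_one, Submodule.sup_mul, one_mul]
  refine sup_le le_sup_left ?_
  rw [groupPart_eq_iSup_span, Submodule.iSup_mul, ← groupPart_eq_iSup_span]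
  refine iSup_le fun g => Submodule.mul_le.2 ?_
  rintro x hx _ ⟨v, rfl⟩
  obtain ⟨c, rfl⟩ := Submodule.mem_span_singleton.1 hx
  rw [smul_mul_assoc, ofGroupAlg_of_mul_ofVec]
  refine Submodule.smul_mem _ c (add_mem (Submodule.mem_sup_right ?_) ?_)
  · exact Submodule.mul_mem_mul ⟨_, rfl⟩ ⟨_, rfl⟩
  · exact Submodule.mem_sup_left ⟨_, rfl⟩

lemma map_grT_zero :
    (grT k G V 0).map (toHP k G V ρ lam κC κL).toLinearMap = groupPart ρ lam κC κL := by
  have hrange : toHP k G V ρ lam κC κL '' Set.range (gIn k G V) =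
      (ofGroupAlg ρ lam κC κL).range := by
    rw [← Set.range_comp]
    rfl
  rw [grT_zero, ← Subalgebra.map_toSubmodule, AlgHom.map_adjoin, hrange, Algebra.adjoin_eq,
    groupPart]

theorem filtP_eq_affinePart_pow_mul_groupPart (n : ℕ) :
    filtP k G V ρ lam κC κL n = affinePart ρ lam κC κL ^ n * groupPart ρ lam κC κL := by
  induction n with
  | zero => rw [pow_zero, one_mul, ← map_grT_zero, filtP, filtT]
  | succ n ih =>
    have haffine : (1 ⊔ LinearMap.range (vIn k G V)).map (toHP k G V ρ lam κC κL).toLinearMap =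
        affinePart ρ lam κC κL := by
      rw [Submodule.map_sup, Submodule.map_one, ← LinearMap.range_comp]
      rfl
    rw [filtP, filtT_succ_eq_mul, Submodule.map_mul, Submodule.map_mul, ← filtP, ih, haffine,
      map_grT_zero, pow_succ, mul_assoc, mul_assoc]
    congr 1
    apply le_antisymm
    · calc groupPart ρ lam κC κL * (affinePart ρ lam κC κL * groupPart ρ lam κC κL)
          ≤ affinePart ρ lam κC κL * groupPart ρ lam κC κL * groupPart ρ lam κC κL := by
            rw [← mul_assoc]
            exact mul_le_mul_left (groupPart_mul_affinePart_le ρ lam κC κL) _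
        _ = affinePart ρ lam κC κL * groupPart ρ lam κC κL := by
            rw [mul_assoc, groupPart_mul_groupPart]
    · exact le_mul_of_one_le_left' (one_le_groupPart ρ lam κC κL)

variable {ρ lam κC κL}

/-- The universal property of `H_{λ,κ}`: an algebra map out of it is a pair of maps on `kG` and on
`V` satisfying the defining relations. -/
def liftHP {A : Type*} [Semiring A] [Algebra k A] (f : MonoidAlgebra k G →ₐ[k] A) (h : V →ₗ[k] A)
    (hact : ∀ g v, f (MonoidAlgebra.of k G g) * h v =
      h (ρ g v) * f (MonoidAlgebra.of k G g) + f (lam g v))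
    (hcomm : ∀ v w, h v * h w = h w * h v +
      LinearMap.mul' k A (TensorProduct.map h f.toLinearMap (κL v w)) + f (κC v w)) :
    HP k G V ρ lam κC κL →ₐ[k] A :=
  RingQuot.liftAlgHom k
    ⟨TensorAlgebra.lift k (f.toLinearMap.coprod h), by
      have hg (a : MonoidAlgebra k G) :
          TensorAlgebra.lift k (f.toLinearMap.coprod h) (gIn k G V a) = f a := by simp [gIn]
      have hv (v : V) : TensorAlgebra.lift k (f.toLinearMap.coprod h) (vIn k G V v) = h v := by
        simp [vIn]
      have hvg (t : V ⊗[k] MonoidAlgebra k G) :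
          TensorAlgebra.lift k (f.toLinearMap.coprod h) (embVG k G V t) =
            LinearMap.mul' k A (TensorProduct.map h f.toLinearMap t) := by
        induction t with
        | zero => simp only [map_zero]
        | tmul v a => simp [embVG, hg, hv]
        | add s t hs ht => simp only [map_add, hs, ht]
      rintro _ _ (_ | ⟨a, b⟩ | ⟨g, v⟩ | ⟨v, w⟩)
      · rw [hg, map_one, map_one]
      · rw [map_mul, hg, hg, hg, map_mul]
      · rw [map_add, map_mul, map_mul, hg, hv, hv, hg, hact]
      · rw [map_add, map_add, map_mul, map_mul, hv, hv, hvg, hg, hcomm]⟩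

section LiftHP

variable {A : Type*} [Semiring A] [Algebra k A] (f : MonoidAlgebra k G →ₐ[k] A) (h : V →ₗ[k] A)
    (hact : ∀ g v, f (MonoidAlgebra.of k G g) * h v =
      h (ρ g v) * f (MonoidAlgebra.of k G g) + f (lam g v))
    (hcomm : ∀ v w, h v * h w = h w * h v +
      LinearMap.mul' k A (TensorProduct.map h f.toLinearMap (κL v w)) + f (κC v w))

lemma liftHP_ofGroupAlg (a : MonoidAlgebra k G) :
    liftHP f h hact hcomm (ofGroupAlg ρ lam κC κL a) = f a := by
  rw [← toHP_gIn, liftHP, toHP, RingQuot.liftAlgHom_mkAlgHom_apply]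
  simp [gIn]

lemma liftHP_ofVec (v : V) : liftHP f h hact hcomm (ofVec ρ lam κC κL v) = h v := by
  rw [← toHP_vIn, liftHP, toHP, RingQuot.liftAlgHom_mkAlgHom_apply]
  simp [vIn]

end LiftHP

end General

section SymmetricAlgebra

variable {R M A : Type*} [CommSemiring R] [AddCommMonoid M] [Module R M] [Semiring A] [Algebra R A]

lemma isMulCommutative_adjoin_range (f : M →ₗ[R] A) (hf : ∀ x y, f x * f y = f y * f x) :
    IsMulCommutative (Algebra.adjoin R (Set.range f)) :=
  Algebra.isMulCommutative_adjoin R (by rintro _ ⟨x, rfl⟩ _ ⟨y, rfl⟩; exact hf x y)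

open scoped IsMulCommutative in
/-- The extension to `S(M)` of a linear map from `M` to a noncommutative algebra whose values
commute with each other. -/
def symLift (f : M →ₗ[R] A) (hf : ∀ x y, f x * f y = f y * f x) : SymmetricAlgebra R M →ₐ[R] A :=
  have := isMulCommutative_adjoin_range f hf
  (Algebra.adjoin R (Set.range f)).val.comp
    (SymmetricAlgebra.lift
      (f.codRestrict (Subalgebra.toSubmodule (Algebra.adjoin R (Set.range f)))
        fun x => Algebra.subset_adjoin ⟨x, rfl⟩))

open scoped IsMulCommutative in
lemma symLift_ι (f : M →ₗ[R] A) (hf : ∀ x y, f x * f y = f y * f x) (x : M) :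
    symLift f hf (SymmetricAlgebra.ι R M x) = f x :=
  have := isMulCommutative_adjoin_range f hf
  congrArg Subtype.val (SymmetricAlgebra.lift_ι_apply _ x)

lemma symmetricAlgebra_algHom_ext {f h : SymmetricAlgebra R M →ₐ[R] A}
    (hfh : ∀ x, f (SymmetricAlgebra.ι R M x) = h (SymmetricAlgebra.ι R M x)) : f = h := by
  refine AlgHom.ext fun a => ?_
  induction a using SymmetricAlgebra.induction with
  | algebraMap r => rw [AlgHom.commutes, AlgHom.commutes]
  | ι x => exact hfh x
  | mul a b ha hb => rw [map_mul, map_mul, ha, hb]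
  | add a b ha hb => rw [map_add, map_add, ha, hb]

variable (R M) in
/-- The subspace of elements of degree at most `n` of `S(M)`. -/
def symFilt (n : ℕ) : Submodule R (SymmetricAlgebra R M) :=
  (1 ⊔ LinearMap.range (SymmetricAlgebra.ι R M)) ^ n

end SymmetricAlgebra

section SkewMonoidAlgebra

variable {R A G : Type*} [CommSemiring R] [Semiring A] [Algebra R A] [Monoid G]
    [MulSemiringAction G A] [SMulCommClass G R A]

variable (R A G) in
/-- The inclusion of the coefficients into a skew monoid algebra. -/
def skewC : A →ₐ[R] SkewMonoidAlgebra A G where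
  __ := SkewMonoidAlgebra.singleOneRingHom
  commutes' _ := rfl

lemma skewC_apply (a : A) : skewC R A G a = SkewMonoidAlgebra.single 1 a :=
  rfl

lemma of_mul_skewC (g : G) (a : A) :
    SkewMonoidAlgebra.of A G g * skewC R A G a =
      skewC R A G (g • a) * SkewMonoidAlgebra.of A G g := by
  simp [skewC_apply, SkewMonoidAlgebra.of_apply, SkewMonoidAlgebra.single_mul_single]

lemma skewC_mul_of (a : A) (g : G) :
    skewC R A G a * SkewMonoidAlgebra.of A G g = SkewMonoidAlgebra.single g a := by
  simp [skewC_apply, SkewMonoidAlgebra.of_apply, SkewMonoidAlgebra.single_mul_single]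

end SkewMonoidAlgebra

section Skew

variable {k G V : Type} [Field k] [Group G] [AddCommGroup V] [Module k V]
    (ρ : Representation k G V) (lam : G → V →ₗ[k] MonoidAlgebra k G)

lemma ofVec_mul_comm (v w : V) :
    ofVec ρ lam 0 0 v * ofVec ρ lam 0 0 w = ofVec ρ lam 0 0 w * ofVec ρ lam 0 0 v := by
  have hrel := RingQuot.mkAlgHom_rel k (PRel.comm (ρ := ρ) (lam := lam) (κC := 0) (κL := 0) v w)
  simp only [LinearMap.zero_apply, map_zero, add_zero, map_mul] at hrel
  exact hrel

/-- The algebra map `S(V) → H_{λ,0}` extending the structure map on `V`. -/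
def ofSym : SymmetricAlgebra k V →ₐ[k] HP k G V ρ lam 0 0 :=
  symLift (ofVec ρ lam 0 0) (ofVec_mul_comm ρ lam)

lemma ofSym_ι (v : V) : ofSym ρ lam (SymmetricAlgebra.ι k V v) = ofVec ρ lam 0 0 v :=
  symLift_ι ..

lemma map_ofSym_symFilt (n : ℕ) :
    (symFilt k V n).map (ofSym ρ lam).toLinearMap = affinePart ρ lam 0 0 ^ n := by
  have hι : (ofSym ρ lam).toLinearMap ∘ₗ SymmetricAlgebra.ι k V = ofVec ρ lam 0 0 :=
    LinearMap.ext (ofSym_ι ρ lam)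
  rw [symFilt, Submodule.map_pow, Submodule.map_sup, Submodule.map_one, ← LinearMap.range_comp, hι,
    affinePart]

variable (k G V) in
/-- The filtration of `S(V) ⋊ G` by degree in `S(V)`; as a filtration of the underlying vector space
it does not depend on the action of `G` on `S(V)`. -/
def skewFilt (n : ℕ) : Submodule k (SkewMonoidAlgebra (SymmetricAlgebra k V) G) :=
  ⨆ g : G, (symFilt k V n).map (SkewMonoidAlgebra.lsingle k g)

variable [MulSemiringAction G (SymmetricAlgebra k V)] [SMulCommClass G k (SymmetricAlgebra k V)]
    {ρ lam} {ℓ : G → Module.Dual k V}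

lemma ofGroupAlg_of_mul_ofSym
    (hsmul : ∀ (g : G) v, g • SymmetricAlgebra.ι k V v =
      SymmetricAlgebra.ι k V (ρ g v) + algebraMap k _ (ℓ g v))
    (hlam : ∀ g v, lam g v = ℓ g v • MonoidAlgebra.of k G g) (g : G) (a : SymmetricAlgebra k V) :
    ofGroupAlg ρ lam 0 0 (MonoidAlgebra.of k G g) * ofSym ρ lam a =
      ofSym ρ lam (g • a) * ofGroupAlg ρ lam 0 0 (MonoidAlgebra.of k G g) := by
  induction a using SymmetricAlgebra.induction with
  | algebraMap r => rw [smul_algebraMap, AlgHom.commutes, Algebra.commutes]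
  | ι v =>
    rw [hsmul, map_add, AlgHom.commutes, ofSym_ι, ofSym_ι, ofGroupAlg_of_mul_ofVec, hlam,
      map_smul, add_mul, Algebra.smul_def]
  | mul a b ha hb => rw [smul_mul', map_mul, map_mul, ← mul_assoc, ha, mul_assoc, hb, mul_assoc]
  | add a b ha hb => rw [smul_add, map_add, map_add, mul_add, add_mul, ha, hb]

section OfSkew

variable (hsmul : ∀ (g : G) v, g • SymmetricAlgebra.ι k V v =
      SymmetricAlgebra.ι k V (ρ g v) + algebraMap k _ (ℓ g v))
    (hlam : ∀ g v, lam g v = ℓ g v • MonoidAlgebra.of k G g)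

/-- The algebra map `S(V) ⋊ G → H_{λ,0}`, where `G` acts on `S(V)` through the affine maps
`v ↦ ᵍv + ℓ(g,v)` and `λ(g,v) = ℓ(g,v) g`. -/
def ofSkew : SkewMonoidAlgebra (SymmetricAlgebra k V) G →ₐ[k] HP k G V ρ lam 0 0 :=
  SkewMonoidAlgebra.liftNCAlgHom (ofSym ρ lam)
    ((ofGroupAlg ρ lam 0 0 : MonoidAlgebra k G →* _).comp (MonoidAlgebra.of k G))
    (ofGroupAlg_of_mul_ofSym hsmul hlam _ _).symm

/-- The inverse of `ofSkew`. -/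
def toSkew : HP k G V ρ lam 0 0 →ₐ[k] SkewMonoidAlgebra (SymmetricAlgebra k V) G :=
  liftHP (MonoidAlgebra.lift k _ G (SkewMonoidAlgebra.of (SymmetricAlgebra k V) G))
    ((skewC k (SymmetricAlgebra k V) G).toLinearMap ∘ₗ SymmetricAlgebra.ι k V)
    (fun g v => by
      simp only [LinearMap.comp_apply, AlgHom.toLinearMap_apply, MonoidAlgebra.lift_of, hlam,
        map_smul, of_mul_skewC, hsmul, map_add, AlgHom.commutes, add_mul]
      rw [Algebra.smul_def])
    (fun v w => by
      simp only [LinearMap.comp_apply, AlgHom.toLinearMap_apply, LinearMap.zero_apply, map_zero,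
        add_zero, ← map_mul, mul_comm])

lemma ofSkew_single (g : G) (a : SymmetricAlgebra k V) :
    ofSkew hsmul hlam (SkewMonoidAlgebra.single g a) =
      ofSym ρ lam a * ofGroupAlg ρ lam 0 0 (MonoidAlgebra.of k G g) :=
  SkewMonoidAlgebra.liftNC_single ..

lemma toSkew_ofSym (a : SymmetricAlgebra k V) :
    toSkew hsmul hlam (ofSym ρ lam a) = skewC k _ G a := by
  have hcomp : (toSkew hsmul hlam).comp (ofSym ρ lam) = skewC k _ G :=
    symmetricAlgebra_algHom_ext fun v => by
      rw [AlgHom.comp_apply, ofSym_ι, toSkew, liftHP_ofVec]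
      rfl
  exact DFunLike.congr_fun hcomp a

lemma ofSkew_injective : Function.Injective (ofSkew hsmul hlam) := by
  have hleft : (toSkew hsmul hlam).toLinearMap ∘ₗ (ofSkew hsmul hlam).toLinearMap =
      LinearMap.id := by
    refine SkewMonoidAlgebra.lhom_ext fun g a => ?_
    rw [LinearMap.comp_apply, AlgHom.toLinearMap_apply, AlgHom.toLinearMap_apply, ofSkew_single,
      map_mul, toSkew_ofSym, toSkew, liftHP_ofGroupAlg, MonoidAlgebra.lift_of, skewC_mul_of,
      LinearMap.id_apply]
  exact Function.LeftInverse.injective (DFunLike.congr_fun hleft)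

lemma filtP_eq_map_ofSkew (n : ℕ) :
    filtP k G V ρ lam 0 0 n = (skewFilt k G V n).map (ofSkew hsmul hlam).toLinearMap := by
  rw [skewFilt, filtP_eq_affinePart_pow_mul_groupPart, groupPart_eq_iSup_span, Submodule.mul_iSup,
    Submodule.map_iSup, ← map_ofSym_symFilt]
  refine iSup_congr fun g => ?_
  have hmul : (ofSkew hsmul hlam).toLinearMap ∘ₗ SkewMonoidAlgebra.lsingle k g =
      LinearMap.mulRight k (ofGroupAlg ρ lam 0 0 (MonoidAlgebra.of k G g)) ∘ₗ
        (ofSym ρ lam).toLinearMap :=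
    LinearMap.ext (ofSkew_single hsmul hlam g)
  rw [← Submodule.map_comp, hmul, Submodule.map_comp]
  ext x
  simp only [Submodule.mem_mul_span_singleton, Submodule.mem_map, LinearMap.mulRight_apply]

end OfSkew

lemma nonempty_skewFilt_equiv_filtP
    (hsmul : ∀ (g : G) v, g • SymmetricAlgebra.ι k V v =
      SymmetricAlgebra.ι k V (ρ g v) + algebraMap k _ (ℓ g v))
    (hlam : ∀ g v, lam g v = ℓ g v • MonoidAlgebra.of k G g) (n : ℕ) :
    Nonempty (skewFilt k G V n ≃ₗ[k] filtP k G V ρ lam 0 0 n) := by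
  rw [filtP_eq_map_ofSkew hsmul hlam]
  exact ⟨Submodule.equivMapOfInjective _ (ofSkew_injective hsmul hlam) _⟩

end Skew

section Cocycle

variable {k G V : Type} [Field k] [Group G] [AddCommGroup V] [Module k V]
    {ρ : Representation k G V} {lam : G → V →ₗ[k] MonoidAlgebra k G} {ℓ : G → Module.Dual k V}

variable (ρ ℓ) in
/-- The algebra endomorphisms of `S(V)` extending the affine maps `v ↦ ᵍv + ℓ(g,v)`. The cocycle
condition on `ℓ` says that these affine maps compose as the elements of `G` do. -/
def affineHom (hℓ : ∀ g h v, ℓ (g * h) v = ℓ g (ρ h v) + ℓ h v) :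
    G →* (SymmetricAlgebra k V →ₐ[k] SymmetricAlgebra k V) where
  toFun g := SymmetricAlgebra.lift
    (SymmetricAlgebra.ι k V ∘ₗ ρ g + Algebra.linearMap k _ ∘ₗ ℓ g)
  map_one' := by
    have hℓ_one (v : V) : ℓ 1 v = 0 := by simpa using hℓ 1 1 v
    refine symmetricAlgebra_algHom_ext fun v => ?_
    simp [hℓ_one]
  map_mul' g h := by
    refine symmetricAlgebra_algHom_ext fun v => ?_
    simp [hℓ, AlgHom.mul_apply, add_assoc]

lemma affineHom_ι (hℓ : ∀ g h v, ℓ (g * h) v = ℓ g (ρ h v) + ℓ h v) (g : G) (v : V) :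
    affineHom ρ ℓ hℓ g (SymmetricAlgebra.ι k V v) =
      SymmetricAlgebra.ι k V (ρ g v) + algebraMap k _ (ℓ g v) :=
  SymmetricAlgebra.lift_ι_apply _ v

/-- The action of `G` on the algebra `S(V)` given by `affineHom`. -/
abbrev affineAction (hℓ : ∀ g h v, ℓ (g * h) v = ℓ g (ρ h v) + ℓ h v) :
    MulSemiringAction G (SymmetricAlgebra k V) where
  smul g a := affineHom ρ ℓ hℓ g a
  one_smul a := DFunLike.congr_fun (map_one (affineHom ρ ℓ hℓ)) a
  mul_smul g h a := DFunLike.congr_fun (map_mul (affineHom ρ ℓ hℓ) g h) a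
  smul_zero g := map_zero (affineHom ρ ℓ hℓ g)
  smul_add g := map_add (affineHom ρ ℓ hℓ g)
  smul_one g := map_one (affineHom ρ ℓ hℓ g)
  smul_mul g := map_mul (affineHom ρ ℓ hℓ g)

lemma nonempty_skewFilt_equiv_filtP_of_cocycle
    (hℓ : ∀ g h v, ℓ (g * h) v = ℓ g (ρ h v) + ℓ h v)
    (hlam : ∀ g v, lam g v = ℓ g v • MonoidAlgebra.of k G g) (n : ℕ) :
    Nonempty (skewFilt k G V n ≃ₗ[k] filtP k G V ρ lam 0 0 n) :=
  letI := affineAction hℓ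
  haveI : SMulCommClass G k (SymmetricAlgebra k V) :=
    ⟨fun g c a => map_smul (affineHom ρ ℓ hℓ g) c a⟩
  nonempty_skewFilt_equiv_filtP (affineHom_ι hℓ) hlam n

theorem isPBWP_of_cocycle (hℓ : ∀ g h v, ℓ (g * h) v = ℓ g (ρ h v) + ℓ h v)
    (hlam : ∀ g v, lam g v = ℓ g v • MonoidAlgebra.of k G g) : IsPBWP k G V ρ lam 0 0 := by
  intro n
  obtain ⟨e⟩ := nonempty_skewFilt_equiv_filtP_of_cocycle hℓ hlam n
  obtain ⟨e₀⟩ := nonempty_skewFilt_equiv_filtP_of_cocycle (ρ := ρ) (lam := 0) (ℓ := 0)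
    (by simp) (by simp) n
  exact (e.symm.trans e₀).finrank_eq

end Cocycle

section JordanBlock

variable (k : Type) [Field k] (p : ℕ) [Fact p.Prime] [CharP k p]

/-- The coefficient `ℓ(g,v)` of `λ(g,v) = ℓ(g,v) g` in the Jordan block example. -/
def jordanCocycle (x : Multiplicative (ZMod p)) : Module.Dual k (Fin 2 → k) :=
  cf k p x • LinearMap.proj 0 + (cf k p x * (cf k p x - 1) / 2) • LinearMap.proj 1

lemma lam8_apply (x : Multiplicative (ZMod p)) (u : Fin 2 → k) :
    lam8 k p x u = jordanCocycle k p x u • MonoidAlgebra.of k _ x := by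
  simp [lam8, jordanCocycle, mul_comm]

lemma jordanCocycle_mul (h2 : (2 : k) ≠ 0) (x y : Multiplicative (ZMod p)) (u : Fin 2 → k) :
    jordanCocycle k p (x * y) u = jordanCocycle k p x (ρ2 k p y u) + jordanCocycle k p y u := by
  have hchoose (a b : k) :
      (a + b) * (a + b - 1) / 2 = a * (a - 1) / 2 + b * (b - 1) / 2 + a * b := by
    field_simp
    ring
  have hρ0 : ρ2 k p y u 0 = u 0 + cf k p y * u 1 := by simp [ρ2, E2]
  have hρ1 : ρ2 k p y u 1 = u 1 := by simp [ρ2, E2]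
  simp only [jordanCocycle, cf_mul, hchoose, LinearMap.add_apply, LinearMap.smul_apply,
    LinearMap.proj_apply, smul_eq_mul, hρ0, hρ1]
  ring

end JordanBlock

end DeformKoszul

/-- **Example 5.3** of Shepler–Witherspoon, "Deforming group actions on Koszul
algebras": in characteristic `p > 2`, for the cyclic group `G = ⟨g⟩` of order `p`
acting on `V = kv ⊕ kw` by `ᵍv = v`, `ᵍw = v + w`, the parameters
`λ(gⁱ, v) = i gⁱ`, `λ(1,w) = λ(g,w) = 0`, `λ(gⁱ,w) = (i choose 2) gⁱ` and `κ = 0`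
define a PBW deformation `H_{λ,0}` of `S(V) ⋊ G`. -/
theorem example_jordan_block_is_PBW_deformation
    (k : Type) [Field k] (p : ℕ) [Fact p.Prime] (hp : 2 < p) [CharP k p] :
    IsPBWP k (Multiplicative (ZMod p)) (Fin 2 → k) (ρ2 k p) (lam8 k p) 0 0 := by
  have h2 : (2 : k) ≠ 0 := Ring.two_ne_zero (by rw [ringChar.eq k p]; exact hp.ne')
  exact isPBWP_of_cocycle (jordanCocycle_mul k p h2) (lam8_apply k p)
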